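/- arXiv:1105.4369 — 4 statements merged into one kernel-verified Lean document; each statement's English description precedes it below -/
import Mathlib

section
/- Let D be a real number and let k be the natural number with k ≤ |D| < k+1. Then the minimum of the quantity Σ_{j∈ℤ} j² μ_j, taken over all families μ : ℤ → ℝ such that μ_j ≥ 0 for all j, the family (μ_j) is summable with Σ_{j∈ℤ} μ_j = 1, the family (j·μ_j) is summable with Σ_{j∈ℤ} j·μ_j = D, and the family (j²·μ_j) is summable, is attained and equals (2k+1)|D| − k − k². That is: every such μ satisfies Σ_{j∈ℤ} j² μ_j ≥ (2k+1)|D| − k − k², and there exists such a μ achieving equality. -/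
/-!
Write `|D| = s * D` with `s = ±1`. For every integer `j`, the numbers `s * j - k` and
`s * j - k - 1` are consecutive integers, so their product
`j² - (2k+1) s j + k(k+1)` is nonnegative; integrating this against `μ` gives the lower bound
(`consecutive_bound`). Equality forces the support of `μ` to lie in `{s k, s (k+1)}`, and the weights
`k + 1 - |D|` and `|D| - k` at these two points have mean `D`; `hasSum_two_point` computes the
moments of this measure.
-/

/-- The secant of `x ↦ x²` through `k` and `k + 1` lies below the parabola at every integer. -/
lemma consecutive_bound (k i : ℤ) :
    (2 * (k : ℝ) + 1) * i - k - (k : ℝ) ^ 2 ≤ (i : ℝ) ^ 2 := by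
  have h : (2 * k + 1) * i - k - k ^ 2 ≤ i ^ 2 := by
    rcases le_or_gt i k with h | h
    · nlinarith
    · have h' : k + 1 ≤ i := h
      nlinarith
  exact_mod_cast h

/-- Integration of `f` against the measure with masses `p` at `a` and `q` at `b`. -/
lemma hasSum_two_point (f : ℤ → ℝ) (a b : ℤ) (p q : ℝ) :
    HasSum (fun j => f j * ((if j = a then p else 0) + (if j = b then q else 0)))
      (f a * p + f b * q) := by
  have h := (hasSum_ite_eq a (f a * p)).add (hasSum_ite_eq b (f b * q))
  refine h.congr_fun ?_
  intro j
  split_ifs <;> simp_all [mul_add]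

/-- For `D : ℝ` and `k : ℕ` with `k ≤ |D| < k+1`, the minimum of
`∑ j² μ_j` over feasible tuples `μ` (nonnegative, summing to 1, with first moment `D`
and finite second moment) is attained and equals `(2k+1)|D| − k − k²`. -/
theorem multiplicity_minimization (D : ℝ) (k : ℕ)
    (hk1 : (k : ℝ) ≤ |D|) (hk2 : |D| < (k : ℝ) + 1) :
    (∀ μ : ℤ → ℝ, (∀ j, 0 ≤ μ j) → Summable μ → ∑' j : ℤ, μ j = 1 →
      Summable (fun j : ℤ => (j : ℝ) * μ j) → ∑' j : ℤ, (j : ℝ) * μ j = D →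
      Summable (fun j : ℤ => (j : ℝ) ^ 2 * μ j) →
      (2 * (k : ℝ) + 1) * |D| - (k : ℝ) - (k : ℝ) ^ 2 ≤ ∑' j : ℤ, (j : ℝ) ^ 2 * μ j) ∧
    (∃ μ : ℤ → ℝ, (∀ j, 0 ≤ μ j) ∧ Summable μ ∧ ∑' j : ℤ, μ j = 1 ∧
      Summable (fun j : ℤ => (j : ℝ) * μ j) ∧ ∑' j : ℤ, (j : ℝ) * μ j = D ∧
      Summable (fun j : ℤ => (j : ℝ) ^ 2 * μ j) ∧
      ∑' j : ℤ, (j : ℝ) ^ 2 * μ j = (2 * (k : ℝ) + 1) * |D| - (k : ℝ) - (k : ℝ) ^ 2) := by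
  obtain ⟨s, hs2, hsD⟩ : ∃ s : ℤ, (s : ℝ) ^ 2 = 1 ∧ |D| = s * D := by
    rcases abs_choice D with h | h
    · exact ⟨1, by simp, by simpa using h⟩
    · exact ⟨-1, by simp, by simpa using h⟩
  constructor
  · intro μ hμ h0 h0' h1 h1' h2
    have hL := ((h1.hasSum.mul_left ((2 * (k : ℝ) + 1) * s)).sub
      (h0.hasSum.mul_left ((k : ℝ) + (k : ℝ) ^ 2)))
    rw [h0', h1'] at hL
    have hle := hasSum_le (fun j => ?_) hL h2.hasSum
    · rw [hsD]
      linarith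
    · have hb := consecutive_bound k (s * j)
      push_cast at hb
      rw [mul_pow, hs2, one_mul] at hb
      have := mul_le_mul_of_nonneg_right hb (hμ j)
      linarith
  · have H := fun f : ℤ → ℝ =>
      hasSum_two_point f (s * k) (s * (k + 1)) (k + 1 - |D|) (|D| - k)
    have H0 := H (fun _ => 1)
    have H1 := H (fun j => (j : ℝ))
    have H2 := H (fun j => (j : ℝ) ^ 2)
    simp only [one_mul] at H0
    refine ⟨_, fun j => ?_, H0.summable, H0.tsum_eq.trans ?_, H1.summable, H1.tsum_eq.trans ?_,
      H2.summable, H2.tsum_eq.trans ?_⟩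
    · apply add_nonneg <;> split_ifs <;> linarith
    · ring
    · push_cast
      rw [hsD]
      linear_combination D * hs2
    · push_cast
      rw [mul_pow, mul_pow, hs2]
      ring
end

section
/- Let D be a real number that is not an integer, let d = ⌊D⌋ be the largest integer below D, and write D = α·d + (1−α)·(d+1) with α = d + 1 − D ∈ (0,1). Let μ : ℤ → ℝ satisfy: μ_j ≥ 0 for all j, Σ_{j∈ℤ} μ_j = 1 (absolutely convergent), Σ_{j∈ℤ} j·μ_j = D (absolutely convergent), and the family (j²·μ_j) is summable. Then Σ_{j∈ℤ} j² μ_j ≥ α·d² + (1−α)·(d+1)², and if equality holds then μ_d = α, μ_{d+1} = 1−α, and μ_j = 0 for all j ∉ {d, d+1}; i.e., the minimizing tuple is unique and is supported on the two integers nearest to D. -/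
/-!
For an integer `j`, the product `(j - d) (j - d - 1)` is nonnegative and vanishes only at
`j = d` and `j = d + 1`. Its `μ`-average equals, by the two moment constraints,
`∑ j² μ_j - (2d + 1) D + d (d + 1)`, which is exactly the gap in the asserted inequality.
If the gap is zero, every term of this nonnegative series vanishes, so `μ` lives on `{d, d + 1}`,
and the mass and first-moment constraints then determine the two remaining weights.
-/

lemma consecutive_product_pos (d j : ℤ) (h0 : j ≠ d) (h1 : j ≠ d + 1) :
    0 < ((j : ℝ) - d) * ((j : ℝ) - d - 1) := by
  have h : 0 < (j - d) * (j - d - 1) := by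
    rcases lt_or_gt_of_ne h0 with h | h
    · exact mul_pos_of_neg_of_neg (by omega) (by omega)
    · exact mul_pos (by omega) (by omega)
  exact_mod_cast h

/-- If `D` is not an integer, `d = ⌊D⌋` and `α = d + 1 − D ∈ (0,1)`, then any
feasible tuple `μ` for `D` satisfies `∑ j² μ_j ≥ α d² + (1−α)(d+1)²`, and in the case of
equality the unique minimizing tuple is supported on `{d, d+1}` with `μ_d = α`,
`μ_{d+1} = 1 − α`. -/
theorem noninteger_vorticity_minimizer (D : ℝ) (hDnot : ¬ ∃ n : ℤ, D = (n : ℝ))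
    (d : ℤ) (hd : d = ⌊D⌋) (α : ℝ) (hα : α = (d : ℝ) + 1 - D)
    (μ : ℤ → ℝ) (hpos : ∀ j, 0 ≤ μ j) (hsum : Summable μ) (hmass : ∑' j : ℤ, μ j = 1)
    (hsum1 : Summable (fun j : ℤ => (j : ℝ) * μ j))
    (hmom1 : ∑' j : ℤ, (j : ℝ) * μ j = D)
    (hsum2 : Summable (fun j : ℤ => (j : ℝ) ^ 2 * μ j)) :
    α * (d : ℝ) ^ 2 + (1 - α) * ((d : ℝ) + 1) ^ 2 ≤ ∑' j : ℤ, (j : ℝ) ^ 2 * μ j ∧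
    (∑' j : ℤ, (j : ℝ) ^ 2 * μ j = α * (d : ℝ) ^ 2 + (1 - α) * ((d : ℝ) + 1) ^ 2 →
      μ d = α ∧ μ (d + 1) = 1 - α ∧ ∀ j : ℤ, j ≠ d → j ≠ d + 1 → μ j = 0) := by
  have hterm : ∀ j : ℤ, 0 ≤ ((j : ℝ) - d) * ((j : ℝ) - d - 1) * μ j := by
    intro j
    by_cases h0 : j = d
    · simp [h0]
    by_cases h1 : j = d + 1
    · simp [h1]
    exact mul_nonneg (consecutive_product_pos d j h0 h1).le (hpos j)
  have hgap : HasSum (fun j : ℤ => ((j : ℝ) - d) * ((j : ℝ) - d - 1) * μ j)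
      (∑' j : ℤ, (j : ℝ) ^ 2 * μ j - (α * (d : ℝ) ^ 2 + (1 - α) * ((d : ℝ) + 1) ^ 2)) := by
    have h := (hsum2.hasSum.sub (hsum1.hasSum.mul_left (2 * (d : ℝ) + 1))).add
      (hsum.hasSum.mul_left ((d : ℝ) * (d + 1)))
    rw [hmom1, hmass] at h
    convert h using 1
    · rfl
    · funext j
      ring
    · rw [hα]
      ring
  refine ⟨sub_nonneg.mp (hgap.nonneg hterm), fun heq => ?_⟩
  rw [heq, sub_self] at hgap
  have hzero : ∀ j : ℤ, j ≠ d → j ≠ d + 1 → μ j = 0 := by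
    intro j h0 h1
    have hj := congrFun ((hasSum_zero_iff_of_nonneg hterm).mp hgap) j
    exact (mul_eq_zero.mp hj).resolve_left (consecutive_product_pos d j h0 h1).ne'
  have hne : d ≠ d + 1 := by omega
  have hm : μ d + μ (d + 1) = 1 := by
    rw [← hmass, tsum_eq_sum (s := {d, d + 1}), Finset.sum_pair hne]
    intro j hj
    simp only [Finset.mem_insert, Finset.mem_singleton, not_or] at hj
    exact hzero j hj.1 hj.2
  have hm1 : (d : ℝ) * μ d + ((d : ℝ) + 1) * μ (d + 1) = D := by
    rw [← hmom1, tsum_eq_sum (s := {d, d + 1}), Finset.sum_pair hne]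
    · push_cast
      rfl
    · intro j hj
      simp only [Finset.mem_insert, Finset.mem_singleton, not_or] at hj
      rw [hzero j hj.1 hj.2, mul_zero]
  refine ⟨?_, ?_, hzero⟩
  · linear_combination ((d : ℝ) + 1) * hm - hm1 - hα
  · linear_combination hm1 - (d : ℝ) * hm + hα
end

section
/- Let γ > 0. Define Φ* : ℝ → ℝ by Φ*(f) = sup_{t∈ℝ} ( f·t − πγ·Φ(t/(2π)) ) (the Legendre transform of t ↦ πγ·Φ(t/(2π))). Then this supremum is finite for every f ∈ ℝ, and: Φ*(f) = 0 whenever |f| ≤ γ/2, and Φ*(f) = 2πk|f| − πγk² whenever kγ − γ/2 ≤ |f| ≤ kγ + γ/2 for a positive integer k. -/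
/-!
`Phi` is the piecewise linear interpolation of `D ↦ D²` at the integers, so it is the maximum of the
chords `D ↦ (2j+1)|D| - j - j²` (`chord_le_Phi`). When `kγ - γ/2 ≤ |f| ≤ kγ + γ/2`, the slope
`2|f|/γ` lies between the slopes `2k-1` and `2k+1` of the two chords meeting at `k`, hence
`t ↦ f t - πγ Phi(t/(2π))` is maximal at `|t| = 2πk`, with `t` of the sign of `f`. Every `f` falls
into one of these ranges, `k = 0` giving the range `|f| ≤ γ/2`.
-/

/-- The function `Φ(D) = (2k+1)|D| − k − k²` where `k = ⌊|D|⌋ ∈ ℕ`. -/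
noncomputable def Phi (D : ℝ) : ℝ :=
  (2 * (⌊|D|⌋₊ : ℝ) + 1) * |D| - (⌊|D|⌋₊ : ℝ) - (⌊|D|⌋₊ : ℝ) ^ 2

/-- Each chord of the square function between consecutive integers minorizes `Phi`. -/
lemma chord_le_Phi (D : ℝ) (j : ℤ) : (2 * (j : ℝ) + 1) * |D| - j - (j : ℝ) ^ 2 ≤ Phi D := by
  unfold Phi
  have h1 : (⌊|D|⌋₊ : ℝ) ≤ |D| := Nat.floor_le (abs_nonneg D)
  have h2 : |D| < (⌊|D|⌋₊ : ℝ) + 1 := Nat.lt_floor_add_one _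
  generalize ⌊|D|⌋₊ = m at *
  -- The difference of the two sides is `(m - j) * (2|D| - 1 - m - j)`.
  rcases lt_trichotomy j (m : ℤ) with h | h | h
  · have h3 : (j : ℝ) + 1 ≤ m := by exact_mod_cast h
    nlinarith [mul_nonneg (by linarith : (0 : ℝ) ≤ m - j)
      (by linarith : (0 : ℝ) ≤ 2 * |D| - 1 - m - j)]
  · subst h
    simp
  · have h3 : (m : ℝ) + 1 ≤ j := by exact_mod_cast h
    nlinarith [mul_nonneg (by linarith : (0 : ℝ) ≤ j - m)
      (by linarith : (0 : ℝ) ≤ 1 + m + j - 2 * |D|)]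

lemma Phi_of_abs_eq_natCast {D : ℝ} {k : ℕ} (h : |D| = k) : Phi D = (k : ℝ) ^ 2 := by
  unfold Phi
  rw [h, Nat.floor_natCast]
  ring

/-- Subgradient inequality for `Phi` at `|D| = k`, scaled by `γ`. -/
lemma subgradient_Phi {γ a : ℝ} (hγ : 0 < γ) (k : ℕ) (h1 : (k : ℝ) * γ - γ / 2 ≤ a)
    (h2 : a ≤ (k : ℝ) * γ + γ / 2) (D : ℝ) :
    2 * a * (|D| - k) ≤ γ * (Phi D - (k : ℝ) ^ 2) := by
  rcases le_total (k : ℝ) |D| with h | h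
  · have h3 := mul_le_mul_of_nonneg_left (chord_le_Phi D k) hγ.le
    push_cast at h3
    nlinarith [mul_nonneg (sub_nonneg.2 h) (sub_nonneg.2 h2)]
  · have h3 := mul_le_mul_of_nonneg_left (chord_le_Phi D (k - 1)) hγ.le
    push_cast at h3
    nlinarith [mul_nonneg (sub_nonneg.2 h) (sub_nonneg.2 h1)]

/-- The supremum defining the Legendre transform is attained; `k = 0` is allowed. -/
lemma isGreatest_legendre {γ : ℝ} (hγ : 0 < γ) (f : ℝ) (k : ℕ)
    (h1 : (k : ℝ) * γ - γ / 2 ≤ |f|) (h2 : |f| ≤ (k : ℝ) * γ + γ / 2) :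
    IsGreatest (Set.range fun t : ℝ => f * t - Real.pi * γ * Phi (t / (2 * Real.pi)))
      (2 * Real.pi * (k : ℝ) * |f| - Real.pi * γ * (k : ℝ) ^ 2) := by
  have hπ := Real.pi_pos
  constructor
  · rcases le_total 0 f with hf | hf
    · refine ⟨2 * Real.pi * k, ?_⟩
      have hD : 2 * Real.pi * k / (2 * Real.pi) = (k : ℝ) := by field_simp
      simp only [hD]
      rw [Phi_of_abs_eq_natCast (Nat.abs_cast k), abs_of_nonneg hf]
      ring
    · refine ⟨-(2 * Real.pi * k), ?_⟩
      have hD : -(2 * Real.pi * k) / (2 * Real.pi) = -(k : ℝ) := by field_simp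
      simp only [hD]
      rw [Phi_of_abs_eq_natCast ((abs_neg _).trans (Nat.abs_cast k)), abs_of_nonpos hf]
      ring
  · rintro _ ⟨t, rfl⟩
    obtain ⟨D, rfl⟩ : ∃ D, t = 2 * Real.pi * D := ⟨t / (2 * Real.pi), by field_simp⟩
    have hD : 2 * Real.pi * D / (2 * Real.pi) = D := by field_simp
    simp only [hD]
    have h3 := mul_le_mul_of_nonneg_left (subgradient_Phi hγ k h1 h2 D) hπ.le
    have h4 : f * D ≤ |f| * |D| := (le_abs_self _).trans (abs_mul f D).le
    have h5 := mul_le_mul_of_nonneg_left h4 hπ.le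
    nlinarith

/-- Let `γ > 0` and let `Φ*(f)` be the Legendre transform of
`t ↦ πγ Φ(t/(2π))`. Then the defining supremum is finite for every `f`, and
`Φ*(f) = 0` for `|f| ≤ γ/2`, while `Φ*(f) = 2πk|f| − πγk²` whenever
`kγ − γ/2 ≤ |f| ≤ kγ + γ/2` with `k ≥ 1` an integer. -/
theorem legendre_transform_of_Phi (γ : ℝ) (hγ : 0 < γ) :
    (∀ f : ℝ, BddAbove
      (Set.range fun t : ℝ => f * t - Real.pi * γ * Phi (t / (2 * Real.pi)))) ∧
    (∀ f : ℝ, |f| ≤ γ / 2 →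
      sSup (Set.range fun t : ℝ => f * t - Real.pi * γ * Phi (t / (2 * Real.pi))) = 0) ∧
    (∀ f : ℝ, ∀ k : ℕ, 1 ≤ k →
      (k : ℝ) * γ - γ / 2 ≤ |f| → |f| ≤ (k : ℝ) * γ + γ / 2 →
      sSup (Set.range fun t : ℝ => f * t - Real.pi * γ * Phi (t / (2 * Real.pi))) =
        2 * Real.pi * (k : ℝ) * |f| - Real.pi * γ * (k : ℝ) ^ 2) := by
  refine ⟨fun f => ?_, fun f hf => ?_, fun f k _ h1 h2 =>
    (isGreatest_legendre hγ f k h1 h2).csSup_eq⟩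
  · have h0 : 0 ≤ |f| / γ + 1 / 2 := by positivity
    have ha : |f| / γ * γ = |f| := div_mul_cancel₀ _ hγ.ne'
    have h1 := mul_le_mul_of_nonneg_right (Nat.floor_le h0) hγ.le
    have h2 := mul_le_mul_of_nonneg_right (Nat.lt_floor_add_one (|f| / γ + 1 / 2)).le hγ.le
    exact ⟨_, (isGreatest_legendre hγ f ⌊|f| / γ + 1 / 2⌋₊ (by linarith) (by linarith)).2⟩
  · have h := (isGreatest_legendre hγ f 0 (by push_cast; linarith [abs_nonneg f])
      (by push_cast; linarith)).csSup_eq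
    simpa using h
end

section
/- Let (Ω, 𝔪) be a measure space, and let (μ_k)_{k∈ℤ} be a family of measurable functions μ_k : Ω → ℝ with μ_k ≥ 0 a.e. for every k and Σ_{k∈ℤ} μ_k(x) = 1 for a.e. x ∈ Ω, such that Σ_{k∈ℤ} k² ∫_Ω μ_k d𝔪 < ∞ and the function D(x) := Σ_{k∈ℤ} k·μ_k(x) is defined a.e. (the series converging absolutely a.e.). Then ∫_Ω Φ(D(x)) d𝔪(x) ≤ Σ_{k∈ℤ} k² ∫_Ω μ_k d𝔪. -/
/-!
For integers `j` and `n`, the product `(|j| - n)(|j| - n - 1)` of consecutive integers is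
nonnegative, so `(2n+1)|j| - n - n² ≤ j²`. Averaging this over `j` with the probability weights
`μ_j(x)` and taking `n = ⌊|D(x)|⌋` gives `Φ(D(x)) ≤ ∑ j² μ_j(x)` wherever the right side converges
(`Phi_tsum_le`). By Tonelli the right side is finite almost everywhere, integrable, and has integral
`∑ j² ∫ μ_j`. As `Φ ≥ 0`, integrating the pointwise inequality gives the claim, with no need to
show that `Φ ∘ D` is measurable.
-/

open MeasureTheory

lemma Phi_nonneg (D : ℝ) : 0 ≤ Phi D := by
  unfold Phi
  have h := Nat.floor_le (abs_nonneg D)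
  have h0 : (0 : ℝ) ≤ (⌊|D|⌋₊ : ℝ) := Nat.cast_nonneg _
  nlinarith

lemma affine_abs_le_sq (n : ℕ) (j : ℤ) :
    (2 * (n : ℝ) + 1) * |(j : ℝ)| - n - (n : ℝ) ^ 2 ≤ (j : ℝ) ^ 2 := by
  have h : (2 * (n : ℤ) + 1) * |j| - n - (n : ℤ) ^ 2 ≤ j ^ 2 := by
    rw [← sq_abs j]
    rcases le_or_gt |j| (n : ℤ) with h | h
    · nlinarith
    · have h' : (n : ℤ) + 1 ≤ |j| := h
      nlinarith
  exact_mod_cast h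

/-- The pointwise inequality: for a probability distribution `p` on `ℤ` with finite second moment,
`Φ` of the mean is at most the second moment. -/
lemma Phi_tsum_le (p : ℤ → ℝ) (hp : ∀ k, 0 ≤ p k) (hs : Summable p) (h1 : ∑' k, p k = 1)
    (hD : Summable (fun k : ℤ => (k : ℝ) * p k))
    (h2 : Summable (fun k : ℤ => (k : ℝ) ^ 2 * p k)) :
    Phi (∑' k : ℤ, (k : ℝ) * p k) ≤ ∑' k : ℤ, (k : ℝ) ^ 2 * p k := by
  have habs : Summable (fun k : ℤ => |(k : ℝ)| * p k) := by
    refine hD.abs.congr fun k => ?_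
    rw [abs_mul, abs_of_nonneg (hp k)]
  have hle : |∑' k : ℤ, (k : ℝ) * p k| ≤ ∑' k : ℤ, |(k : ℝ)| * p k := by
    refine (norm_tsum_le_tsum_norm hD.norm).trans_eq (tsum_congr fun k => ?_)
    rw [Real.norm_eq_abs, abs_mul, abs_of_nonneg (hp k)]
  unfold Phi
  generalize ⌊|∑' k : ℤ, (k : ℝ) * p k|⌋₊ = n
  have hsum := ((habs.hasSum.mul_left (2 * (n : ℝ) + 1)).sub (hs.hasSum.mul_left (n : ℝ))).sub
    (hs.hasSum.mul_left ((n : ℝ) ^ 2))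
  have key := hasSum_le (fun k => ?_) hsum h2.hasSum
  · rw [h1] at key
    have := mul_le_mul_of_nonneg_left hle (by positivity : (0 : ℝ) ≤ 2 * (n : ℝ) + 1)
    linarith
  · have := mul_le_mul_of_nonneg_right (affine_abs_le_sq n k) (hp k)
    linarith

/-- If `(μ_k)_{k∈ℤ}` is an a.e. nonnegative measurable partition of unity
with finite total second moment `Σ_k k² ∫ μ_k < ∞`, and the vorticity
`D(x) = Σ_k k μ_k(x)` is defined a.e. (series converging absolutely a.e.), then
`∫ Φ(D(x)) dm ≤ Σ_k k² ∫ μ_k dm`. -/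
theorem Phi_of_vorticity_le_second_moment {Ω : Type*} [MeasurableSpace Ω] (m : Measure Ω)
    (μ : ℤ → Ω → ℝ) (hmeas : ∀ k, Measurable (μ k)) (hint : ∀ k, Integrable (μ k) m)
    (hpos : ∀ k, 0 ≤ᵐ[m] μ k)
    (hpart : ∀ᵐ x ∂m, Summable (fun k : ℤ => μ k x) ∧ ∑' k : ℤ, μ k x = 1)
    (hbd : Summable (fun k : ℤ => (k : ℝ) ^ 2 * ∫ x, μ k x ∂m))
    (hDsum : ∀ᵐ x ∂m, Summable (fun k : ℤ => (k : ℝ) * μ k x)) :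
    ∫ x, Phi (∑' k : ℤ, (k : ℝ) * μ k x) ∂m ≤
      ∑' k : ℤ, (k : ℝ) ^ 2 * ∫ x, μ k x ∂m := by
  have hpos' : ∀ᵐ x ∂m, ∀ k, 0 ≤ μ k x := ae_all_iff.2 hpos
  have hnn : ∀ k : ℤ, 0 ≤ (k : ℝ) ^ 2 * ∫ x, μ k x ∂m := fun k =>
    mul_nonneg (sq_nonneg _) (integral_nonneg_of_ae (hpos k))
  -- The second moment is taken in `[0, ∞]`, where Tonelli needs no summability hypothesis.
  set L : Ω → ENNReal := fun x => ∑' k : ℤ, ENNReal.ofReal ((k : ℝ) ^ 2 * μ k x) with hL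
  have hmk : ∀ k : ℤ, Measurable fun x => ENNReal.ofReal ((k : ℝ) ^ 2 * μ k x) := fun k =>
    ((hmeas k).const_mul _).ennreal_ofReal
  have hLm : Measurable L := Measurable.ennreal_tsum hmk
  have hLint : ∫⁻ x, L x ∂m = ENNReal.ofReal (∑' k : ℤ, (k : ℝ) ^ 2 * ∫ x, μ k x ∂m) := by
    rw [hL, lintegral_tsum fun k => (hmk k).aemeasurable, ENNReal.ofReal_tsum_of_nonneg hnn hbd]
    refine tsum_congr fun k => ?_
    rw [← integral_const_mul, ofReal_integral_eq_lintegral_ofReal ((hint k).const_mul _)]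
    filter_upwards [hpos k] with x hx
    exact mul_nonneg (sq_nonneg _) hx
  have hLtop : ∫⁻ x, L x ∂m ≠ ⊤ := hLint ▸ ENNReal.ofReal_ne_top
  have hfin : ∀ᵐ x ∂m, L x < ⊤ := ae_lt_top hLm hLtop
  have hval : ∫ x, (L x).toReal ∂m = ∑' k : ℤ, (k : ℝ) ^ 2 * ∫ x, μ k x ∂m := by
    rw [integral_toReal hLm.aemeasurable hfin, hLint, ENNReal.toReal_ofReal (tsum_nonneg hnn)]
  rw [← hval]
  refine integral_mono_of_nonneg (Filter.Eventually.of_forall fun x => Phi_nonneg _)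
    (integrable_toReal_of_lintegral_ne_top hLm.aemeasurable hLtop) ?_
  filter_upwards [hpos', hpart, hDsum, hfin] with x hx hp hD hf
  have heq : ∀ k : ℤ, (ENNReal.ofReal ((k : ℝ) ^ 2 * μ k x)).toReal = (k : ℝ) ^ 2 * μ k x :=
    fun k => ENNReal.toReal_ofReal (mul_nonneg (sq_nonneg _) (hx k))
  have h2 : Summable fun k : ℤ => (k : ℝ) ^ 2 * μ k x :=
    (ENNReal.summable_toReal hf.ne).congr heq
  have hLx : (L x).toReal = ∑' k : ℤ, (k : ℝ) ^ 2 * μ k x := by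
    rw [hL, ENNReal.tsum_toReal_eq fun k => ENNReal.ofReal_ne_top]
    exact tsum_congr heq
  rw [hLx]
  exact Phi_tsum_le (fun k => μ k x) hx hp.1 hp.2 hD h2
end
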